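/- Let c, s₁, s₂ ∈ ℝ. Suppose (u₁,v₁), (u₂,v₂), (u₃,v₃), (u₄,v₄) are four pairwise distinct points of ℝ² each satisfying 3v_i² − 3u_i² − 2cu_i = s₁ and 6u_iv_i − 2cv_i = s₂, and suppose D_i := 4c² − 36(u_i² + v_i²) ≠ 0 for each i. Then 1/D₁ + 1/D₂ + 1/D₃ + 1/D₄ = 0; that is, the total signed magnification of a source in the four-image region of the generic elliptic umbilic map is identically zero. -/

import Mathlib

/-!
In the isotropic coordinates `z = u + iv`, `w = u - iv` the lens equation becomes
`3z² + 2cw = a`, `3w² + 2cz = b` with `a = -(s₁ - is₂)`, `b = -(s₁ + is₂)`, and the Jacobian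
determinant becomes `4c² - 36zw`. If `c ≠ 0`, eliminating `w` shows that the images are the roots
of a quartic `P` in `z` whose derivative at an image is `2c` times the Jacobian determinant there,
so the claim is the Euler–Jacobi identity `∑ 1 / P'(z) = 0` over the roots of `P`. If `c = 0`, four
distinct images form the full grid `{±ζ} × {±ω}`, on which `1 / (zw)`, being odd in `w`, sums to
zero.
-/

open Finset Polynomial

section EulerJacobi

variable {ι : Type*} {s : Finset ι}

theorem eq_C_leadingCoeff_mul_nodal {R : Type*} [CommRing R] [IsDomain R] {v : ι → R} {P : R[X]}
    (hv : Set.InjOn v s) (hdeg : P.degree = #s)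
    (hroot : ∀ i ∈ s, P.eval (v i) = 0) : P = C P.leadingCoeff * Lagrange.nodal s v := by
  have hP : P.leadingCoeff ≠ 0 := by
    rw [leadingCoeff_ne_zero]
    rintro rfl
    simp at hdeg
  refine eq_of_degree_le_of_eval_index_eq s hv hdeg.le ?_ ?_ fun i hi ↦ ?_
  · rw [degree_C_mul hP, Lagrange.degree_nodal, hdeg]
  · rw [leadingCoeff_mul, leadingCoeff_C, Lagrange.nodal_monic.leadingCoeff, mul_one]
  · rw [eval_mul, Lagrange.eval_nodal_at_node hi, mul_zero, hroot i hi]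

variable {F : Type*} [Field F] {v : ι → F} {P : F[X]}

theorem sum_eval_div_eval_derivative (hv : Set.InjOn v s) (hdeg : P.degree = #s)
    (hroot : ∀ i ∈ s, P.eval (v i) = 0) {Q : F[X]} (hQ : Q.degree < #s) :
    ∑ i ∈ s, Q.eval (v i) / (derivative P).eval (v i) = Q.coeff (#s - 1) / P.leadingCoeff := by
  classical
  rw [Lagrange.coeff_eq_sum hv hQ, sum_div]
  refine sum_congr rfl fun i hi ↦ ?_
  have hderiv : (derivative P).eval (v i) =
      P.leadingCoeff * ∏ j ∈ s.erase i, (v i - v j) := by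
    conv_lhs => rw [eq_C_leadingCoeff_mul_nodal hv hdeg hroot]
    rw [derivative_C_mul, eval_C_mul, Lagrange.eval_nodal_derivative_eval_node_eq hi,
      Lagrange.eval_nodal]
  rw [hderiv, div_div, mul_comm]

theorem sum_inv_eval_derivative_eq_zero (hv : Set.InjOn v s) (hdeg : P.degree = #s)
    (hroot : ∀ i ∈ s, P.eval (v i) = 0) (hs : 2 ≤ #s) :
    ∑ i ∈ s, ((derivative P).eval (v i))⁻¹ = 0 := by
  have hone : (1 : F[X]).degree < #s := by
    rw [degree_one]
    exact_mod_cast one_pos.trans_le (one_le_two.trans hs)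
  have hcoeff : (1 : F[X]).coeff (#s - 1) = 0 := by
    rw [coeff_one, if_neg (by lia)]
  simpa [hcoeff] using sum_eval_div_eval_derivative hv hdeg hroot hone

end EulerJacobi

section IsotropicCoordinates

section CommRing

variable {R : Type*} [CommRing R] {c a b : R} {S : Finset (R × R)}

/-- The polynomial in `z` obtained by eliminating `w` from `3z² + 2cw = a` and `3w² + 2cz = b`. -/
noncomputable def eliminant (c a b : R) : R[X] :=
  C 27 * X ^ 4 - C (18 * a) * X ^ 2 + C (8 * c ^ 3) * X + C (3 * a ^ 2 - 4 * c ^ 2 * b)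

theorem degree_eliminant (h27 : (27 : R) ≠ 0) (c a b : R) : (eliminant c a b).degree = 4 := by
  unfold eliminant
  compute_degree!

theorem eval_eliminant {z w : R} (hz : 3 * z ^ 2 + 2 * c * w = a)
    (hw : 3 * w ^ 2 + 2 * c * z = b) : (eliminant c a b).eval z = 0 := by
  simp only [eliminant, eval_add, eval_sub, eval_mul, eval_C, eval_pow, eval_X]
  subst hz hw
  ring

theorem eval_derivative_eliminant {z w : R} (hz : 3 * z ^ 2 + 2 * c * w = a) (b : R) :
    (derivative (eliminant c a b)).eval z = 2 * c * (4 * c ^ 2 - 36 * (z * w)) := by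
  simp only [eliminant, derivative_add, derivative_sub, derivative_C_mul, derivative_X_pow,
    derivative_X, derivative_C, eval_add, eval_sub, eval_mul, eval_C, eval_pow, eval_X, eval_one,
    eval_zero]
  subst hz
  push_cast
  ring

theorem injOn_fst_of_isotropic [IsDomain R] (h2c : 2 * c ≠ 0)
    (hS : ∀ p ∈ S, 3 * p.1 ^ 2 + 2 * c * p.2 = a) : Set.InjOn Prod.fst (S : Set (R × R)) := by
  intro p hp q hq hpq
  refine Prod.ext hpq (mul_left_cancel₀ h2c ?_)
  linear_combination hS p hp - hS q hq - 3 * (p.1 + q.1) * hpq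

theorem eq_product_of_sq_eq [IsDomain R] [DecidableEq R] {ζ ω : R} (hcard : #S = 4)
    (hS : ∀ p ∈ S, p.1 ^ 2 = ζ ^ 2 ∧ p.2 ^ 2 = ω ^ 2) :
    S = ({ζ, -ζ} : Finset R) ×ˢ ({ω, -ω} : Finset R) := by
  refine eq_of_subset_of_card_le (fun p hp ↦ ?_) ?_
  · simpa [sq_eq_sq_iff_eq_or_eq_neg] using hS p hp
  · rw [card_product, hcard]
    exact Nat.mul_le_mul card_le_two card_le_two

end CommRing

variable {K : Type*} [Field K] {c a b : K} {S : Finset (K × K)}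

theorem sum_inv_mul_eq_zero_of_sq_eq (hcard : #S = 4)
    (hS : ∀ p ∈ S, p.1 ^ 2 = a ∧ p.2 ^ 2 = b) : ∑ p ∈ S, (p.1 * p.2)⁻¹ = 0 := by
  classical
  obtain ⟨⟨ζ, ω⟩, hp⟩ : S.Nonempty := card_pos.mp (by lia)
  obtain ⟨rfl, rfl⟩ := hS _ hp
  obtain rfl := eq_product_of_sq_eq hcard hS
  have hω : ω ≠ -ω := by
    intro h
    have := card_le_two (a := ζ) (b := -ζ)
    rw [card_product, ← h, pair_eq_singleton, card_singleton] at hcard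
    lia
  simp [sum_product, sum_pair hω]

theorem sum_inv_jacobian_isotropic_eq_zero (h6 : (6 : K) ≠ 0) (hcard : #S = 4)
    (hS : ∀ p ∈ S, 3 * p.1 ^ 2 + 2 * c * p.2 = a ∧ 3 * p.2 ^ 2 + 2 * c * p.1 = b) :
    ∑ p ∈ S, (4 * c ^ 2 - 36 * (p.1 * p.2))⁻¹ = 0 := by
  obtain ⟨h2, h3⟩ : (2 : K) ≠ 0 ∧ (3 : K) ≠ 0 := by
    rw [← mul_ne_zero_iff]
    norm_num [h6]
  rcases eq_or_ne c 0 with rfl | hc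
  · have hsq : ∀ p ∈ S, p.1 ^ 2 = a / 3 ∧ p.2 ^ 2 = b / 3 := fun p hp ↦ by
      simpa [eq_div_iff h3, mul_comm] using hS p hp
    have hsum : ∑ p ∈ S, (p.1 * p.2)⁻¹ = 0 := sum_inv_mul_eq_zero_of_sq_eq hcard hsq
    calc ∑ p ∈ S, (4 * 0 ^ 2 - 36 * (p.1 * p.2))⁻¹
        = ∑ p ∈ S, (-36)⁻¹ * (p.1 * p.2)⁻¹ := by
          simp only [zero_pow two_ne_zero, mul_zero, zero_sub, ← neg_mul, mul_inv]
      _ = 0 := by rw [← mul_sum, hsum, mul_zero]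
  · have h2c : 2 * c ≠ 0 := mul_ne_zero h2 hc
    have h27 : (27 : K) ≠ 0 := by
      convert pow_ne_zero 3 h3 using 1
      norm_num
    have hsum := sum_inv_eval_derivative_eq_zero (P := eliminant c a b)
      (injOn_fst_of_isotropic h2c fun p hp ↦ (hS p hp).1)
      (by rw [degree_eliminant h27, hcard]; rfl)
      (fun p hp ↦ eval_eliminant (hS p hp).1 (hS p hp).2) (by lia)
    refine (mul_eq_zero_iff_left (inv_ne_zero h2c)).mp ?_
    rw [← hsum, mul_sum]
    exact sum_congr rfl fun p hp ↦ by
      rw [eval_derivative_eliminant (hS p hp).1, mul_inv (2 * c)]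

end IsotropicCoordinates

/-- The generic elliptic umbilic map `f_c`, over an arbitrary commutative ring. -/
def ellipticUmbilic {R : Type*} [CommRing R] (c : R) (p : R × R) : R × R :=
  (3 * p.2 ^ 2 - 3 * p.1 ^ 2 - 2 * c * p.1, 6 * p.1 * p.2 - 2 * c * p.2)

/-- The determinant of the Jacobian matrix `!![-6u - 2c, 6v; 6v, 6u - 2c]` of `ellipticUmbilic c`
at `(u, v)`, whose inverse is the signed magnification. -/
def ellipticUmbilicJacobian {R : Type*} [CommRing R] (c : R) (p : R × R) : R :=
  4 * c ^ 2 - 36 * (p.1 ^ 2 + p.2 ^ 2)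

section ChangeOfCoordinates

variable {R A : Type*} [CommRing R] [CommRing A] [Algebra R A]

/-- The coordinates `(u + iv, u - iv)` of `(u, v)`, over an extension containing a square root `i`
of `-1`; both are kept since there is no conjugation relating them in general. -/
def isotropicCoord (i : A) (p : R × R) : A × A :=
  (algebraMap R A p.1 + i * algebraMap R A p.2, algebraMap R A p.1 - i * algebraMap R A p.2)

variable {i : A}

theorem isotropicCoord_injective [IsDomain A] [FaithfulSMul R A] (h2 : (2 : A) ≠ 0)
    (hi : i ^ 2 = -1) : Function.Injective (isotropicCoord i : R × R → A × A) := by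
  intro p q hpq
  obtain ⟨hz, hw⟩ := Prod.mk.inj hpq
  refine Prod.ext (FaithfulSMul.algebraMap_injective R A (mul_left_cancel₀ h2 ?_))
    (FaithfulSMul.algebraMap_injective R A (mul_left_cancel₀ h2 ?_))
  · linear_combination hz + hw
  · linear_combination -i * (hz - hw) +
      2 * (algebraMap R A p.2 - algebraMap R A q.2) * hi

theorem ellipticUmbilic_isotropicCoord (hi : i ^ 2 = -1) {c : R} {p s : R × R}
    (h : ellipticUmbilic c p = s) :
    3 * (isotropicCoord i p).1 ^ 2 + 2 * algebraMap R A c * (isotropicCoord i p).2 =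
        -(isotropicCoord i s).2 ∧
      3 * (isotropicCoord i p).2 ^ 2 + 2 * algebraMap R A c * (isotropicCoord i p).1 =
        -(isotropicCoord i s).1 := by
  subst h
  simp only [isotropicCoord, ellipticUmbilic, map_sub, map_mul, map_pow, map_ofNat]
  constructor <;> linear_combination 3 * algebraMap R A p.2 ^ 2 * hi

theorem algebraMap_ellipticUmbilicJacobian (hi : i ^ 2 = -1) (c : R) (p : R × R) :
    algebraMap R A (ellipticUmbilicJacobian c p) =
      4 * algebraMap R A c ^ 2 - 36 * ((isotropicCoord i p).1 * (isotropicCoord i p).2) := by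
  simp only [isotropicCoord, ellipticUmbilicJacobian, map_sub, map_add, map_mul, map_pow,
    map_ofNat]
  linear_combination -36 * algebraMap R A p.2 ^ 2 * hi

end ChangeOfCoordinates

theorem elliptic_umbilic_generic_magnification_relation_general {K : Type*} [Field K]
    (h6 : (6 : K) ≠ 0) (c : K) (s : K × K) (S : Finset (K × K)) (hcard : #S = 4)
    (hS : ∀ p ∈ S, ellipticUmbilic c p = s) :
    ∑ p ∈ S, (ellipticUmbilicJacobian c p)⁻¹ = 0 := by
  classical
  let L := AlgebraicClosure K
  obtain ⟨i, hi⟩ : ∃ i : L, i ^ 2 = -1 := IsAlgClosed.exists_pow_nat_eq (-1) two_pos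
  have h6L : (6 : L) ≠ 0 := fun h ↦ h6 ((algebraMap K L).injective (by rw [map_ofNat, map_zero, h]))
  have h2L : (2 : L) ≠ 0 := fun h ↦ h6L (by linear_combination 3 * h)
  have hinj : Function.Injective (isotropicCoord i : K × K → L × L) :=
    isotropicCoord_injective h2L hi
  have hsum := sum_inv_jacobian_isotropic_eq_zero (c := algebraMap K L c) h6L
    ((card_image_of_injective S hinj).trans hcard)
    (forall_mem_image.mpr fun p hp ↦ ellipticUmbilic_isotropicCoord hi (hS p hp))
  rw [sum_image hinj.injOn] at hsum
  apply (algebraMap K L).injective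
  simpa [algebraMap_ellipticUmbilicJacobian hi] using hsum

/-- Generic elliptic umbilic magnification relation: the total signed magnification of a
source in the four-image region of the generic elliptic umbilic map
`f_c(u,v) = (3v² − 3u² − 2cu, 6uv − 2cv)` is identically zero. -/
theorem elliptic_umbilic_generic_magnification_relation
    (c s₁ s₂ u₁ v₁ u₂ v₂ u₃ v₃ u₄ v₄ : ℝ)
    (h12 : (u₁, v₁) ≠ (u₂, v₂)) (h13 : (u₁, v₁) ≠ (u₃, v₃)) (h14 : (u₁, v₁) ≠ (u₄, v₄))
    (h23 : (u₂, v₂) ≠ (u₃, v₃)) (h24 : (u₂, v₂) ≠ (u₄, v₄)) (h34 : (u₃, v₃) ≠ (u₄, v₄))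
    (h₁a : 3 * v₁ ^ 2 - 3 * u₁ ^ 2 - 2 * c * u₁ = s₁) (h₁b : 6 * u₁ * v₁ - 2 * c * v₁ = s₂)
    (h₂a : 3 * v₂ ^ 2 - 3 * u₂ ^ 2 - 2 * c * u₂ = s₁) (h₂b : 6 * u₂ * v₂ - 2 * c * v₂ = s₂)
    (h₃a : 3 * v₃ ^ 2 - 3 * u₃ ^ 2 - 2 * c * u₃ = s₁) (h₃b : 6 * u₃ * v₃ - 2 * c * v₃ = s₂)
    (h₄a : 3 * v₄ ^ 2 - 3 * u₄ ^ 2 - 2 * c * u₄ = s₁) (h₄b : 6 * u₄ * v₄ - 2 * c * v₄ = s₂)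
    (hD₁ : 4 * c ^ 2 - 36 * (u₁ ^ 2 + v₁ ^ 2) ≠ 0)
    (hD₂ : 4 * c ^ 2 - 36 * (u₂ ^ 2 + v₂ ^ 2) ≠ 0)
    (hD₃ : 4 * c ^ 2 - 36 * (u₃ ^ 2 + v₃ ^ 2) ≠ 0)
    (hD₄ : 4 * c ^ 2 - 36 * (u₄ ^ 2 + v₄ ^ 2) ≠ 0) :
    1 / (4 * c ^ 2 - 36 * (u₁ ^ 2 + v₁ ^ 2)) + 1 / (4 * c ^ 2 - 36 * (u₂ ^ 2 + v₂ ^ 2)) +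
      1 / (4 * c ^ 2 - 36 * (u₃ ^ 2 + v₃ ^ 2)) + 1 / (4 * c ^ 2 - 36 * (u₄ ^ 2 + v₄ ^ 2)) = 0 := by
  have hsum := elliptic_umbilic_generic_magnification_relation_general (by norm_num) c (s₁, s₂)
    {(u₁, v₁), (u₂, v₂), (u₃, v₃), (u₄, v₄)} (by simp [*]) (by simp [*, ellipticUmbilic])
  simpa [*, ellipticUmbilicJacobian, add_assoc] using hsum
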